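/- arXiv:math/9910060 — 2 statements merged into one kernel-verified Lean document; each statement's English description precedes it below -/
import Mathlib

section
/- The submonoid Ψ_1 := Ψ_0 + Φ^+ of ℤ^n, where Φ^+ is the submonoid generated by the vectors ε_i − ε_{i+2} (1 ≤ i ≤ n−2) and Ψ_0 is the smallest W-stable submonoid containing all partitions, is generated by the set {ε_i − ε_{i+2} : 1 ≤ i ≤ n−2} ∪ {ε_{n−1} + ε_n, ε_{2⌈n/2⌉−1}}. -/
open Finset

/-- A permutation of `{1,…,n}` is parity preserving (`π(i) ≡ i mod 2`). -/
def ParityPerm {n : ℕ} (π : Equiv.Perm (Fin n)) : Prop :=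
  ∀ i : Fin n, ((π i : ℕ)) % 2 = (i : ℕ) % 2

/-- Partitions inside `ℤ^n`: weakly decreasing tuples of nonnegative integers. -/
def PartSet (n : ℕ) : Set (Fin n → ℤ) :=
  {lam | (∀ i j : Fin n, i ≤ j → lam j ≤ lam i) ∧ ∀ i, 0 ≤ lam i}

/-- `Ψ_0`: the smallest `W`-stable additive submonoid of `ℤ^n` containing all partitions. -/
noncomputable def Psi0 (n : ℕ) : AddSubmonoid (Fin n → ℤ) :=
  sInf {S | PartSet n ⊆ S ∧
    ∀ π : Equiv.Perm (Fin n), ParityPerm π → ∀ x ∈ S, (fun i => x (π i)) ∈ S}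

/-- The simple-root monoid `Φ⁺`, generated by `ε_i − ε_{i+2}` (0-based here). -/
noncomputable def PhiPlus (n : ℕ) : AddSubmonoid (Fin n → ℤ) :=
  AddSubmonoid.closure
    {v | ∃ i : ℕ, ∃ h : i + 2 < n,
      v = Pi.single (⟨i, by omega⟩ : Fin n) 1 - Pi.single (⟨i + 2, h⟩ : Fin n) 1}

/-!
With 0-based indices, and `λ_n` and `ε_n` read as `0`, a partition `λ` is the sum over `2j < n` of
`(λ_{2j} - λ_{2j+1}) ε_{2j} + λ_{2j+1} (ε_{2j} + ε_{2j+1})`. Hence `Ψ_0` is generated by the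
`W`-orbits of `ε_0` and `ε_0 + ε_1`. Each member of these orbits is a sum of simple roots plus the
member of the same orbit supported at the last even index and, for pairs, the last odd index.
-/

/-- The vectors `ε_i` and `ε_i + ε_j` with `i` even and `j` odd (0-based), a `W`-stable generating
set of `Ψ_0`. -/
def psi0Generators (n : ℕ) : Set (Fin n → ℤ) :=
  {v | ∃ i : Fin n, Even (i : ℕ) ∧ v = Pi.single i 1} ∪
    {v | ∃ i j : Fin n, Even (i : ℕ) ∧ Odd (j : ℕ) ∧ v = Pi.single i 1 + Pi.single j 1}

theorem sum_nsmul_mem_of_antitone {M : Type*} [AddCommMonoid M] {S : AddSubmonoid M} {n : ℕ}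
    {a : Fin n → ℕ} (ha : Antitone a) {u : Fin n → M}
    (heven : ∀ i : Fin n, Even (i : ℕ) → u i ∈ S)
    (hpair : ∀ i j : Fin n, Even (i : ℕ) → (j : ℕ) = i + 1 → u i + u j ∈ S) :
    ∑ i, a i • u i ∈ S := by
  induction n using Nat.twoStepInduction with
  | zero => simp
  | one => simpa using S.nsmul_mem (heven 0 (by simp)) (a 0)
  | more n ih _ =>
    have head : a 0 • u 0 + a 1 • u 1 = (a 0 - a 1) • u 0 + a 1 • (u 0 + u 1) := by
      rw [nsmul_add, ← add_assoc, ← add_nsmul, Nat.sub_add_cancel (ha (Fin.zero_le 1))]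
    have tail : ∑ i : Fin n, a i.succ.succ • u i.succ.succ ∈ S :=
      ih (fun i j hij => ha (by simpa using hij))
        (fun i hi => heven _ (by simpa [parity_simps] using hi))
        (fun i j hi hij => hpair _ _ (by simpa [parity_simps] using hi) (by simp [hij]))
    rw [Fin.sum_univ_succ, Fin.sum_univ_succ, ← add_assoc, Fin.succ_zero_eq_one, head]
    exact S.add_mem (S.add_mem (S.nsmul_mem (heven 0 (by simp)) _)
      (S.nsmul_mem (hpair 0 1 (by simp) (by simp)) _)) tail

section

variable {n : ℕ}

theorem mem_PartSet {x : Fin n → ℤ} : x ∈ PartSet n ↔ Antitone x ∧ 0 ≤ x := Iff.rfl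

theorem PartSet_subset_closure_psi0Generators :
    PartSet n ⊆ AddSubmonoid.closure (psi0Generators n) := by
  intro x hx
  obtain ⟨hanti, hnonneg⟩ := mem_PartSet.1 hx
  lift x to Fin n → ℕ using hnonneg
  have hsum : ∑ i, x i • (Pi.single i 1 : Fin n → ℤ) = fun i => (x i : ℤ) := by
    rw [← Finset.univ_sum_single fun i => (x i : ℤ)]
    simp [← Pi.single_smul]
  rw [← hsum]
  refine sum_nsmul_mem_of_antitone (fun i j hij => by simpa using hanti hij) ?_ ?_
  · exact fun i hi => AddSubmonoid.subset_closure (.inl ⟨i, hi, rfl⟩)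
  · exact fun i j hi hij =>
      AddSubmonoid.subset_closure (.inr ⟨i, j, hi, hij ▸ hi.add_one, rfl⟩)

theorem PartSet_subset_Psi0 : PartSet n ⊆ Psi0 n := fun _ hx =>
  AddSubmonoid.mem_sInf.2 fun _ hS => hS.1 hx

namespace ParityPerm

variable {π ρ : Equiv.Perm (Fin n)}

theorem even_symm_apply (hπ : ParityPerm π) (i : Fin n) :
    Even (π.symm i : ℕ) ↔ Even (i : ℕ) := by
  rw [Nat.even_iff, ← hπ (π.symm i), Equiv.apply_symm_apply, Nat.even_iff]

theorem odd_symm_apply (hπ : ParityPerm π) (i : Fin n) :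
    Odd (π.symm i : ℕ) ↔ Odd (i : ℕ) := by
  rw [← Nat.not_even_iff_odd, hπ.even_symm_apply, Nat.not_even_iff_odd]

theorem mul (hπ : ParityPerm π) (hρ : ParityPerm ρ) : ParityPerm (π * ρ) := fun i =>
  (hπ (ρ i)).trans (hρ i)

theorem swap {i j : Fin n} (hij : (i : ℕ) % 2 = (j : ℕ) % 2) :
    ParityPerm (Equiv.swap i j) := by
  intro k
  rw [Equiv.swap_apply_def]
  split_ifs with hi hj
  · rw [hi, hij]
  · rw [hj, hij]
  · rfl

theorem comp_mem_psi0Generators (hπ : ParityPerm π) {v : Fin n → ℤ}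
    (hv : v ∈ psi0Generators n) : v ∘ π ∈ psi0Generators n := by
  rcases hv with ⟨i, hi, rfl⟩ | ⟨i, j, hi, hj, rfl⟩
  · exact .inl ⟨π.symm i, (hπ.even_symm_apply i).2 hi, Pi.single_comp_equiv ..⟩
  · refine .inr ⟨π.symm i, π.symm j, (hπ.even_symm_apply i).2 hi, (hπ.odd_symm_apply j).2 hj, ?_⟩
    rw [Pi.add_comp, Pi.single_comp_equiv, Pi.single_comp_equiv]

theorem comp_mem_closure_psi0Generators (hπ : ParityPerm π) {x : Fin n → ℤ}
    (hx : x ∈ AddSubmonoid.closure (psi0Generators n)) :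
    x ∘ π ∈ AddSubmonoid.closure (psi0Generators n) := by
  induction hx using AddSubmonoid.closure_induction with
  | mem v hv => exact AddSubmonoid.subset_closure (hπ.comp_mem_psi0Generators hv)
  | zero => exact zero_mem _
  | add x y _ _ hx hy => exact add_mem hx hy

theorem comp_mem_Psi0 (hπ : ParityPerm π) {x : Fin n → ℤ} (hx : x ∈ Psi0 n) :
    x ∘ π ∈ Psi0 n :=
  AddSubmonoid.mem_sInf.2 fun S hS => hS.2 π hπ x (AddSubmonoid.mem_sInf.1 hx S hS)

end ParityPerm

theorem single_mem_Psi0 {i : Fin n} (hi : Even (i : ℕ)) : (Pi.single i 1 : Fin n → ℤ) ∈ Psi0 n := by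
  let zero : Fin n := ⟨0, i.pos⟩
  have hpart : (Pi.single zero 1 : Fin n → ℤ) ∈ PartSet n := by
    refine mem_PartSet.2 ⟨fun k l hkl => ?_, Pi.single_nonneg.2 zero_le_one⟩
    simp only [Pi.single_apply, zero, Fin.ext_iff, Fin.le_def] at *
    split_ifs <;> omega
  have hswap : ParityPerm (Equiv.swap zero i) := .swap (Nat.even_iff.1 hi).symm
  simpa [Pi.single_comp_equiv] using hswap.comp_mem_Psi0 (PartSet_subset_Psi0 hpart)

theorem single_add_single_mem_Psi0 {i j : Fin n} (hi : Even (i : ℕ)) (hj : Odd (j : ℕ)) :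
    (Pi.single i 1 + Pi.single j 1 : Fin n → ℤ) ∈ Psi0 n := by
  rw [Nat.even_iff] at hi
  rw [Nat.odd_iff] at hj
  let zero : Fin n := ⟨0, i.pos⟩
  let one : Fin n := ⟨1, by omega⟩
  have hpart : (Pi.single zero 1 + Pi.single one 1 : Fin n → ℤ) ∈ PartSet n := by
    refine mem_PartSet.2 ⟨fun k l hkl => ?_, add_nonneg
      (Pi.single_nonneg.2 zero_le_one) (Pi.single_nonneg.2 zero_le_one)⟩
    simp only [Pi.add_apply, Pi.single_apply, zero, one, Fin.ext_iff, Fin.le_def] at *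
    split_ifs <;> omega
  let π := Equiv.swap zero i * Equiv.swap one j
  have hπ : ParityPerm π := .mul (.swap hi.symm) (.swap hj.symm)
  have hzero : π.symm zero = i := by
    rw [Equiv.symm_apply_eq, Equiv.Perm.mul_apply,
      Equiv.swap_apply_of_ne_of_ne (x := i), Equiv.swap_apply_right] <;> grind
  have hone : π.symm one = j := by
    rw [Equiv.symm_apply_eq, Equiv.Perm.mul_apply, Equiv.swap_apply_right,
      Equiv.swap_apply_of_ne_of_ne] <;> grind
  simpa [Pi.add_comp, Pi.single_comp_equiv, hzero, hone] using
    hπ.comp_mem_Psi0 (PartSet_subset_Psi0 hpart)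

theorem Psi0_eq_closure_psi0Generators : Psi0 n = AddSubmonoid.closure (psi0Generators n) := by
  refine le_antisymm (sInf_le ⟨PartSet_subset_closure_psi0Generators, fun π hπ x hx =>
    hπ.comp_mem_closure_psi0Generators hx⟩) (AddSubmonoid.closure_le.2 ?_)
  rintro v (⟨i, hi, rfl⟩ | ⟨i, j, hi, hj, rfl⟩)
  · exact single_mem_Psi0 hi
  · exact single_add_single_mem_Psi0 hi hj

theorem single_sub_single_mem_PhiPlus {i j : Fin n} (hij : i ≤ j)
    (hmod : (i : ℕ) % 2 = (j : ℕ) % 2) :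
    (Pi.single i 1 - Pi.single j 1 : Fin n → ℤ) ∈ PhiPlus n := by
  obtain ⟨k, hk⟩ : ∃ k, (j : ℕ) = i + 2 * k := ⟨(j - i) / 2, by omega⟩
  clear hij hmod
  induction k generalizing j with
  | zero => simp [show j = i from Fin.ext hk]
  | succ k ih =>
    let l : Fin n := ⟨i + 2 * k, by omega⟩
    have hroot : (Pi.single l 1 - Pi.single j 1 : Fin n → ℤ) ∈ PhiPlus n :=
      AddSubmonoid.subset_closure ⟨l, by dsimp only [l]; omega, by congr; exact Fin.ext hk⟩
    simpa using add_mem (ih (j := l) rfl) hroot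

theorem Psi0_sup_PhiPlus_eq_sup_closure {p q : Fin n}
    (hp : IsGreatest {i : Fin n | Even (i : ℕ)} p) (hq : IsGreatest {j : Fin n | Odd (j : ℕ)} q) :
    Psi0 n ⊔ PhiPlus n =
      PhiPlus n ⊔ AddSubmonoid.closure {Pi.single p 1 + Pi.single q 1, Pi.single p 1} := by
  set S := PhiPlus n ⊔ AddSubmonoid.closure {Pi.single p 1 + Pi.single q 1, Pi.single p 1}
  have hroots : PhiPlus n ≤ S := le_sup_left
  have hlast : {Pi.single p 1 + Pi.single q 1, Pi.single p 1} ⊆ (S : Set (Fin n → ℤ)) :=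
    AddSubmonoid.closure_le.1 le_sup_right
  have heven {i : Fin n} (hi : Even (i : ℕ)) : Pi.single i 1 - Pi.single p 1 ∈ S :=
    hroots (single_sub_single_mem_PhiPlus (hp.2 hi)
      ((Nat.even_iff.1 hi).trans (Nat.even_iff.1 hp.1).symm))
  have hodd {j : Fin n} (hj : Odd (j : ℕ)) : Pi.single j 1 - Pi.single q 1 ∈ S :=
    hroots (single_sub_single_mem_PhiPlus (hq.2 hj)
      ((Nat.odd_iff.1 hj).trans (Nat.odd_iff.1 hq.1).symm))
  apply le_antisymm
  · rw [Psi0_eq_closure_psi0Generators]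
    refine sup_le (AddSubmonoid.closure_le.2 ?_) hroots
    rintro v (⟨i, hi, rfl⟩ | ⟨i, j, hi, hj, rfl⟩)
    · simpa using add_mem (heven hi) (hlast (.inr rfl))
    · have hmem := add_mem (add_mem (heven hi) (hodd hj)) (hlast (.inl rfl))
      rwa [← add_sub_add_comm, sub_add_cancel] at hmem
  · refine sup_le le_sup_right ((AddSubmonoid.closure_le.2 ?_).trans le_sup_left)
    rintro v (rfl | rfl)
    · exact single_add_single_mem_Psi0 hp.1 hq.1
    · exact single_mem_Psi0 hp.1

end

/-- `Ψ_1 = Ψ_0 + Φ⁺` is generated by the simple roots `ε_i − ε_{i+2}` together with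
`ε_{n−1} + ε_n` and `ε_{2⌈n/2⌉−1}` (the latter is the largest odd 1-based index,
which is `2*((n-1)/2)` in 0-based indexing). -/
theorem Psi1_eq_closure (n : ℕ) (hn : 2 ≤ n) :
    Psi0 n ⊔ PhiPlus n = AddSubmonoid.closure
      ({v | ∃ i : ℕ, ∃ h : i + 2 < n,
          v = Pi.single (⟨i, by omega⟩ : Fin n) 1 - Pi.single (⟨i + 2, h⟩ : Fin n) 1} ∪
        {Pi.single (⟨n - 2, by omega⟩ : Fin n) 1 + Pi.single (⟨n - 1, by omega⟩ : Fin n) 1,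
         Pi.single (⟨2 * ((n - 1) / 2), by omega⟩ : Fin n) 1}) := by
  have hp : IsGreatest {i : Fin n | Even (i : ℕ)} ⟨2 * ((n - 1) / 2), by omega⟩ :=
    ⟨by simp, fun i hi => Fin.le_def.2 (by have := Nat.even_iff.1 hi; dsimp only; omega)⟩
  have hq : IsGreatest {j : Fin n | Odd (j : ℕ)} ⟨2 * (n / 2) - 1, by omega⟩ :=
    ⟨Nat.odd_iff.2 (by dsimp only; omega),
      fun j hj => Fin.le_def.2 (by have := Nat.odd_iff.1 hj; dsimp only; omega)⟩
  have hlast : (Pi.single ⟨n - 2, by omega⟩ 1 + Pi.single ⟨n - 1, by omega⟩ 1 : Fin n → ℤ) =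
      Pi.single ⟨2 * ((n - 1) / 2), by omega⟩ 1 + Pi.single ⟨2 * (n / 2) - 1, by omega⟩ 1 := by
    rcases Nat.even_or_odd' n with ⟨m, hm | hm⟩
    · congr 3 <;> omega
    · rw [add_comm]
      congr 3 <;> omega
  rw [hlast, AddSubmonoid.closure_union, ← PhiPlus, Psi0_sup_PhiPlus_eq_sup_closure hp hq]
end

section
/- Let k be a field of characteristic zero, n ≥ 1, and let W be the group of permutations of {1,…,n} preserving parity, acting on k[z_1,…,z_n] by permuting variables. Fix r ∈ k with r ∉ ℚ_{<0} and set ρ := ((n−1)r, (n−2)r, …, r, 0). For any d ∈ ℕ and any function a : Λ(d) → k, where Λ(d) is the set of partitions λ of length n with Σ_{i odd} λ_i ≤ d, there exists a unique W-invariant polynomial f of degree at most d such that f(ρ + λ) = a(λ) for all λ ∈ Λ(d). -/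
open Finset MvPolynomial

/-- Partitions of length `n` (as `ℕ`-tuples, weakly decreasing). -/
def IsPartitionN {n : ℕ} (lam : Fin n → ℕ) : Prop :=
  ∀ i j : Fin n, i ≤ j → lam j ≤ lam i

/-- `|λ|_odd = ∑_{i odd (1-based)} λ_i` (0-based even positions). -/
def oddDeg {n : ℕ} (lam : Fin n → ℕ) : ℕ :=
  ∑ i ∈ Finset.univ.filter (fun i : Fin n => Even (i : ℕ)), lam i

/-!
Uniqueness: let `f` be invariant of degree at most `d` and vanish at all nodes. Setting
`z_n = 0` leaves a polynomial in `n - 1` variables that vanishes at the nodes shifted by `r`, hence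
is zero by induction on `n`. So `z_n` divides `f`, and by invariance so does the product of all
`z_i` with `i ≡ n mod 2`. The factors `z_i` do not vanish at `ρ + λ + (1, …, 1)`, because `r` is not
a negative rational, so the quotient vanishes at the nodes shifted by `1`. Replacing `λ` by
`λ + (1, …, 1)` raises `|λ|_odd` by exactly the number of factors divided out, so induction on the
degree applies. Carrying an arbitrary shift `s`, with `z_i - s` in place of `z_i`, makes both
inductions close up.

Existence: the evaluation map is injective by uniqueness, so it suffices to find `|Λ(d)|` linearly
independent invariants of degree at most `d`. Orbit sums of the monomials `z^α` with
`α_i = λ_i - λ_{i+1} + λ_{i+2} - ⋯` do this, since `|α|` is the sum of the `λ_i` with `i` odd.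
-/

namespace SemisymmetricInterpolation

section LinearFactors

variable {σ R : Type*} [CommRing R]

theorem X_sub_C_dvd_sub_bind₁_update [DecidableEq σ] (i : σ) (s : R) (f : MvPolynomial σ R) :
    X i - C s ∣ f - bind₁ (Function.update X i (C s)) f := by
  rw [← Ideal.mem_span_singleton, ← Ideal.Quotient.eq]
  let mod := Ideal.Quotient.mkₐ R (Ideal.span {(X i - C s : MvPolynomial σ R)})
  have agree : mod = mod.comp (bind₁ (Function.update X i (C s))) := by
    refine algHom_ext fun j => ?_
    rcases eq_or_ne j i with rfl | hj
    · simpa [mod] using Ideal.Quotient.eq.2 (Ideal.mem_span_singleton_self (X j - C s))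
    · simp [hj]
  exact congr($agree f)

theorem X_sub_C_dvd_iff [DecidableEq σ] {i : σ} {s : R} {f : MvPolynomial σ R} :
    X i - C s ∣ f ↔ bind₁ (Function.update X i (C s)) f = 0 := by
  constructor
  · rintro ⟨g, rfl⟩
    simp
  · intro h
    simpa [h] using X_sub_C_dvd_sub_bind₁_update i s f

theorem X_sub_C_ne_zero [Nontrivial R] (i : σ) (s : R) : (X i - C s : MvPolynomial σ R) ≠ 0 := by
  intro h
  simpa using congrArg (eval fun _ => s + 1) h

theorem prod_X_sub_C_ne_zero [IsDomain R] (S : Finset σ) (s : R) :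
    (∏ i ∈ S, (X i - C s : MvPolynomial σ R)) ≠ 0 :=
  prod_ne_zero_iff.2 fun i _ => X_sub_C_ne_zero i s

theorem prod_X_sub_C_dvd [IsDomain R] {S : Finset σ} {s : R} {f : MvPolynomial σ R}
    (h : ∀ i ∈ S, X i - C s ∣ f) : (∏ i ∈ S, (X i - C s : MvPolynomial σ R)) ∣ f := by
  classical
  induction S using Finset.induction_on with
  | empty => simp
  | insert i S hi ih =>
    obtain ⟨g, rfl⟩ := ih fun j hj => h j (mem_insert_of_mem hj)
    have prod_fixed : bind₁ (Function.update X i (C s)) (∏ j ∈ S, (X j - C s : MvPolynomial σ R)) =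
        ∏ j ∈ S, (X j - C s) := by
      rw [map_prod]
      refine prod_congr rfl fun j hj => ?_
      simp [ne_of_mem_of_not_mem hj hi]
    have hg : X i - C s ∣ g := by
      have hi := X_sub_C_dvd_iff.1 (h i (mem_insert_self i S))
      rw [map_mul, prod_fixed] at hi
      exact X_sub_C_dvd_iff.2 ((mul_eq_zero.1 hi).resolve_left (prod_X_sub_C_ne_zero S s))
    rw [prod_insert hi, mul_comm]
    exact mul_dvd_mul_left _ hg

theorem totalDegree_prod_X_sub_C [IsDomain R] (S : Finset σ) (s : R) :
    (∏ i ∈ S, (X i - C s : MvPolynomial σ R)).totalDegree = #S := by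
  cases exists_wellFoundedGT σ
  rw [← degree_degLexDegree, MonomialOrder.degree_prod fun i _ => X_sub_C_ne_zero i s]
  simp [MonomialOrder.degree_X_sub_C]

theorem totalDegree_bind₁_le {τ : Type*} {g : σ → MvPolynomial τ R}
    (hg : ∀ i, (g i).totalDegree ≤ 1) (f : MvPolynomial σ R) :
    (bind₁ g f).totalDegree ≤ f.totalDegree := by
  rw [← aeval_eq_bind₁, aeval_def, eval₂_eq]
  refine totalDegree_finsetSum_le fun m hm => ?_
  calc (algebraMap R (MvPolynomial τ R) (coeff m f) * ∏ i ∈ m.support, g i ^ m i).totalDegree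
      ≤ (∏ i ∈ m.support, g i ^ m i).totalDegree := by
        grw [totalDegree_mul, algebraMap_eq, totalDegree_C, zero_add]
    _ ≤ ∑ i ∈ m.support, (g i ^ m i).totalDegree := totalDegree_finsetProd _ _
    _ ≤ ∑ i ∈ m.support, m i := by
        refine sum_le_sum fun i _ => ?_
        grw [totalDegree_pow, hg i, mul_one]
    _ ≤ f.totalDegree := le_totalDegree hm

end LinearFactors

section ParityPermutations

variable {n : ℕ}

theorem parityPerm_mul {π τ : Equiv.Perm (Fin n)} (hπ : ParityPerm π) (hτ : ParityPerm τ) :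
    ParityPerm (π * τ) :=
  fun i => (hπ (τ i)).trans (hτ i)

theorem parityPerm_swap {i j : Fin n} (h : (i : ℕ) % 2 = (j : ℕ) % 2) :
    ParityPerm (Equiv.swap i j) := by
  intro l
  rcases eq_or_ne l i with rfl | hi
  · simp [h]
  rcases eq_or_ne l j with rfl | hj
  · simp [h]
  rw [Equiv.swap_apply_of_ne_of_ne hi hj]

theorem exists_parityPerm_extend {π : Equiv.Perm (Fin n)} (hπ : ParityPerm π) :
    ∃ π' : Equiv.Perm (Fin (n + 1)), ParityPerm π' ∧
      (∀ i : Fin n, π' i.castSucc = (π i).castSucc) ∧ π' (Fin.last n) = Fin.last n := by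
  let π' := finSuccEquivLast.symm.permCongr π.optionCongr
  have on_castSucc (i : Fin n) : π' i.castSucc = (π i).castSucc := by
    simp [π', Equiv.permCongr_apply]
  have on_last : π' (Fin.last n) = Fin.last n := by simp [π', Equiv.permCongr_apply]
  refine ⟨π', fun i => ?_, on_castSucc, on_last⟩
  induction i using Fin.lastCases with
  | last => rw [on_last]
  | cast i => rw [on_castSucc]; exact hπ i

end ParityPermutations

section Semisymmetric

/-- The polynomials in `z_1, …, z_n` that are invariant under the group `W` of parity preserving
permutations of the variables. -/
def semisymmetric (R : Type*) [CommRing R] (n : ℕ) : Submodule R (MvPolynomial (Fin n) R) where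
  carrier := {f | ∀ π : Equiv.Perm (Fin n), ParityPerm π → rename π f = f}
  zero_mem' _ _ := map_zero _
  add_mem' hf hg π hπ := by rw [map_add, hf π hπ, hg π hπ]
  smul_mem' c f hf π hπ := by rw [map_smul, hf π hπ]

variable {R : Type*} [CommRing R] {n : ℕ}

theorem mem_semisymmetric_of_mul_mem [IsDomain R] {p f : MvPolynomial (Fin n) R} (hp0 : p ≠ 0)
    (hp : p ∈ semisymmetric R n) (hpf : p * f ∈ semisymmetric R n) : f ∈ semisymmetric R n := by
  intro π hπ
  have h := hpf π hπ
  rw [map_mul, hp π hπ] at h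
  exact mul_left_cancel₀ hp0 h

/-- The substitution of the scalar `s` for the last variable. -/
noncomputable def restrictLast (s : R) :
    MvPolynomial (Fin (n + 1)) R →ₐ[R] MvPolynomial (Fin n) R :=
  bind₁ (Fin.snoc (α := fun _ => MvPolynomial (Fin n) R) X (C s))

theorem totalDegree_restrictLast_le [Nontrivial R] (s : R) (f : MvPolynomial (Fin (n + 1)) R) :
    (restrictLast s f).totalDegree ≤ f.totalDegree := by
  refine totalDegree_bind₁_le (fun i => ?_) f
  induction i using Fin.lastCases <;> simp

theorem eval_restrictLast (s : R) (f : MvPolynomial (Fin (n + 1)) R) (x : Fin n → R) :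
    eval x (restrictLast s f) = eval (Fin.snoc (α := fun _ => R) x s) f := by
  have agree : (aeval x).comp (restrictLast s) = aeval (Fin.snoc (α := fun _ => R) x s) := by
    refine algHom_ext fun i => ?_
    induction i using Fin.lastCases <;> simp [restrictLast]
  simpa [aeval_eq_eval] using congr($agree f)

theorem restrictLast_mem_semisymmetric (s : R) {f : MvPolynomial (Fin (n + 1)) R}
    (hf : f ∈ semisymmetric R (n + 1)) : restrictLast s f ∈ semisymmetric R n := by
  intro π hπ
  obtain ⟨π', hπ', on_castSucc, on_last⟩ := exists_parityPerm_extend hπ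
  have commute : (rename π).comp (restrictLast s) =
      (restrictLast (R := R) s).comp (rename π') := by
    refine algHom_ext fun i => ?_
    induction i using Fin.lastCases <;> simp [restrictLast, on_last, on_castSucc]
  simpa [hf π' hπ'] using congr($commute f)

theorem X_last_sub_C_dvd_of_restrictLast_eq_zero {s : R} {f : MvPolynomial (Fin (n + 1)) R}
    (h : restrictLast s f = 0) : X (Fin.last n) - C s ∣ f := by
  have agree : bind₁ (Function.update X (Fin.last n) (C s)) =
      (rename Fin.castSucc).comp (restrictLast s) := by
    refine algHom_ext fun i => ?_
    induction i using Fin.lastCases <;> simp [restrictLast, Fin.castSucc_ne_last]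
  rw [X_sub_C_dvd_iff, agree, AlgHom.comp_apply, h, map_zero]

theorem X_sub_C_dvd_of_mem_semisymmetric {i j : Fin n} (hij : (i : ℕ) % 2 = (j : ℕ) % 2) {s : R}
    {f : MvPolynomial (Fin n) R} (hf : f ∈ semisymmetric R n) (h : X j - C s ∣ f) :
    X i - C s ∣ f := by
  simpa [hf _ (parityPerm_swap hij)] using map_dvd (rename (Equiv.swap i j)) h

end Semisymmetric

section LastClass

/-- The indices in `Fin (n + 1)` of the same parity as the last one. -/
def lastClass (n : ℕ) : Finset (Fin (n + 1)) :=
  {i | (i : ℕ) % 2 = n % 2}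

@[simp]
theorem mem_lastClass {n : ℕ} {i : Fin (n + 1)} : i ∈ lastClass n ↔ (i : ℕ) % 2 = n % 2 := by
  simp [lastClass]

theorem card_lastClass_pos (n : ℕ) : 0 < #(lastClass n) :=
  card_pos.2 ⟨Fin.last n, by simp⟩

theorem card_lastClass (n : ℕ) :
    #(lastClass n) = #{i : Fin (n + 1) | Even (i : ℕ)} := by
  refine card_equiv Fin.revPerm fun i => ?_
  simp only [mem_lastClass, mem_filter, mem_univ, true_and, Fin.revPerm_apply, Fin.val_rev,
    Nat.even_iff]
  lia

variable {R : Type*} [CommRing R] {n : ℕ}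

theorem prod_lastClass_mem_semisymmetric (s : R) :
    ∏ i ∈ lastClass n, (X i - C s) ∈ semisymmetric R (n + 1) := by
  intro π hπ
  rw [map_prod]
  exact prod_equiv π (fun i => by simp [hπ i]) (fun i _ => by simp)

theorem exists_eq_prod_lastClass_mul [IsDomain R] {s : R} {f : MvPolynomial (Fin (n + 1)) R}
    (hf : f ∈ semisymmetric R (n + 1)) (h : restrictLast s f = 0) :
    ∃ g ∈ semisymmetric R (n + 1), f = (∏ i ∈ lastClass n, (X i - C s)) * g := by
  obtain ⟨g, rfl⟩ := prod_X_sub_C_dvd (S := lastClass n) fun i hi =>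
    X_sub_C_dvd_of_mem_semisymmetric (by simpa using hi) hf
      (X_last_sub_C_dvd_of_restrictLast_eq_zero h)
  exact ⟨g, mem_semisymmetric_of_mul_mem (prod_X_sub_C_ne_zero _ s)
    (prod_lastClass_mem_semisymmetric s) hf, rfl⟩

end LastClass

section Uniqueness

variable {R : Type*} [CommRing R] {n : ℕ}

/-- The point `ρ + λ + (s, …, s)` with `ρ = ((n - 1)r, …, r, 0)`; the interpolation nodes are the
case `s = 0`, and the shift `s` makes the family stable under both reduction steps below. -/
def node (r s : R) (lam : Fin n → ℕ) : Fin n → R :=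
  fun i => ((n - 1 - (i : ℕ) : ℕ) : R) * r + s + (lam i : R)

theorem node_snoc_zero (r s : R) (lam : Fin n → ℕ) :
    node r s (Fin.snoc (α := fun _ => ℕ) lam 0) =
      Fin.snoc (α := fun _ => R) (node r (s + r) lam) s := by
  funext i
  induction i using Fin.lastCases with
  | last => simp [node]
  | cast i =>
    have : n - (i : ℕ) = n - 1 - i + 1 := by lia
    simp only [node, Fin.snoc_castSucc, Fin.val_castSucc, Nat.add_sub_cancel, this]
    push_cast
    ring

theorem node_add_one (r s : R) (lam : Fin n → ℕ) : node r s (lam + 1) = node r (s + 1) lam := by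
  funext i
  simp only [node, Pi.add_apply, Pi.one_apply]
  push_cast
  ring

theorem isPartitionN_snoc_zero {lam : Fin n → ℕ} (h : IsPartitionN lam) :
    IsPartitionN (Fin.snoc (α := fun _ => ℕ) lam 0) := by
  intro i j hij
  induction j using Fin.lastCases with
  | last => simp
  | cast j =>
    induction i using Fin.lastCases with
    | last => exact absurd hij (Fin.castSucc_lt_last j).not_ge
    | cast i => simpa using h i j (by simpa using hij)

theorem oddDeg_snoc_zero (lam : Fin n → ℕ) :
    oddDeg (Fin.snoc (α := fun _ => ℕ) lam 0) = oddDeg lam := by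
  simp [oddDeg, sum_filter, Fin.sum_univ_castSucc]

theorem isPartitionN_add_one {lam : Fin n → ℕ} (h : IsPartitionN lam) : IsPartitionN (lam + 1) :=
  fun i j hij => Nat.succ_le_succ (h i j hij)

theorem oddDeg_add_one (lam : Fin (n + 1) → ℕ) :
    oddDeg (lam + 1) = oddDeg lam + #(lastClass n) := by
  simp [oddDeg, sum_add_distrib, card_lastClass]

theorem le_oddDeg {lam : Fin n → ℕ} (h : IsPartitionN lam) (i : Fin n) : lam i ≤ oddDeg lam := by
  have : NeZero n := ⟨i.pos.ne'⟩
  exact (h 0 i (Fin.zero_le i)).trans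
    (single_le_sum (f := lam) (fun _ _ => Nat.zero_le _) (by simp))

/-- `r` avoids the finitely many values `-b / i` at which a linear factor occurring in the
interpolation of `n`-variable polynomials of degree at most `d` vanishes at a node. Only even `i`
occur, since the factors are indexed by the parity class of the last variable; `i = 0` says that
`1, …, d` are nonzero in `R`. -/
def IsNonexceptional (n d : ℕ) (r : R) : Prop :=
  ∀ i < n, Even i → ∀ b ∈ Icc 1 d, (i : R) * r + b ≠ 0

theorem IsNonexceptional.mono {n' d d' : ℕ} {r : R} (h : IsNonexceptional n' d' r) (hn : n ≤ n')
    (hd : d ≤ d') : IsNonexceptional n d r :=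
  fun i hi hi' b hb => h i (hi.trans_le hn) hi' b (Icc_subset_Icc_right hd hb)

theorem eval_node_add_one_prod_lastClass_ne_zero [IsDomain R] {d : ℕ} {r : R}
    (hr : IsNonexceptional (n + 1) d r) (s : R) {lam : Fin (n + 1) → ℕ}
    (hlam : ∀ i, lam i + 1 ≤ d) :
    eval (node r s (lam + 1)) (∏ i ∈ lastClass n, (X i - C s)) ≠ 0 := by
  rw [map_prod]
  refine prod_ne_zero_iff.2 fun i hi => ?_
  have even_sub : Even (n - (i : ℕ)) := by
    rw [mem_lastClass] at hi
    rw [Nat.even_iff]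
    lia
  convert hr (n - i) (by lia) even_sub (lam i + 1) (mem_Icc.2 ⟨by lia, hlam i⟩) using 1
  simp only [node, map_sub, eval_X, eval_C, Nat.add_sub_cancel, Pi.add_apply, Pi.one_apply]
  ring

/-- The invariant polynomials of degree at most `d`. -/
noncomputable def semisymmetricOfDegreeLE (R : Type*) [CommRing R] (n d : ℕ) :
    Submodule R (MvPolynomial (Fin n) R) :=
  semisymmetric R n ⊓ restrictTotalDegree (Fin n) R d

theorem mem_semisymmetricOfDegreeLE {d : ℕ} {f : MvPolynomial (Fin n) R} :
    f ∈ semisymmetricOfDegreeLE R n d ↔ f ∈ semisymmetric R n ∧ f.totalDegree ≤ d := by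
  rw [semisymmetricOfDegreeLE, Submodule.mem_inf, mem_restrictTotalDegree]

/-- The set `Λ(d)` of interpolation labels. -/
def boundedPartitions (n d : ℕ) : Set (Fin n → ℕ) :=
  {lam | IsPartitionN lam ∧ oddDeg lam ≤ d}

/-- The polynomial `f` vanishes at all nodes `ρ + λ + (s, …, s)` with `λ ∈ Λ(d)`. -/
def VanishesAtNodes (d : ℕ) (r s : R) (f : MvPolynomial (Fin n) R) : Prop :=
  ∀ lam ∈ boundedPartitions n d, eval (node r s lam) f = 0

theorem VanishesAtNodes.restrictLast {d : ℕ} {r s : R} {f : MvPolynomial (Fin (n + 1)) R}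
    (hf : VanishesAtNodes d r s f) : VanishesAtNodes d r (s + r) (restrictLast s f) := by
  rintro lam ⟨hlam, hdeg⟩
  rw [eval_restrictLast, ← node_snoc_zero]
  exact hf _ ⟨isPartitionN_snoc_zero hlam, by rwa [oddDeg_snoc_zero]⟩

theorem VanishesAtNodes.of_prod_lastClass_mul [IsDomain R] {d : ℕ} {r s : R}
    {g : MvPolynomial (Fin (n + 1)) R} (hr : IsNonexceptional (n + 1) (d + #(lastClass n)) r)
    (hf : VanishesAtNodes (d + #(lastClass n)) r s ((∏ i ∈ lastClass n, (X i - C s)) * g)) :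
    VanishesAtNodes d r (s + 1) g := by
  rintro lam ⟨hlam, hdeg⟩
  have hpos := card_lastClass_pos n
  have heval := hf (lam + 1) ⟨isPartitionN_add_one hlam, by rw [oddDeg_add_one]; lia⟩
  rw [map_mul] at heval
  rw [← node_add_one]
  refine (mul_eq_zero.1 heval).resolve_left
    (eval_node_add_one_prod_lastClass_ne_zero hr s fun i => ?_)
  have := le_oddDeg hlam i
  lia

theorem eq_zero_of_vanishesAtNodes [IsDomain R] {d : ℕ} {r : R} (hr : IsNonexceptional n d r)
    {s : R} {f : MvPolynomial (Fin n) R} (hf : f ∈ semisymmetric R n) (hd : f.totalDegree ≤ d)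
    (hv : VanishesAtNodes d r s f) : f = 0 := by
  induction n generalizing d s with
  | zero =>
    have hconst := hv 0 ⟨fun _ _ _ => le_rfl, by simp [oddDeg]⟩
    rw [eq_C_of_isEmpty f, eval_C] at hconst
    rw [eq_C_of_isEmpty f, hconst, C_0]
  | succ n ih =>
    induction d using Nat.strong_induction_on generalizing s f with
    | _ d ihd =>
    have restrict_eq_zero : restrictLast s f = 0 :=
      ih (hr.mono n.le_succ le_rfl) (restrictLast_mem_semisymmetric s hf)
        ((totalDegree_restrictLast_le s f).trans hd) hv.restrictLast
    obtain ⟨g, hg, rfl⟩ := exists_eq_prod_lastClass_mul hf restrict_eq_zero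
    by_contra hne
    have hg0 : g ≠ 0 := right_ne_zero_of_mul hne
    rw [totalDegree_mul_of_isDomain (prod_X_sub_C_ne_zero _ s) hg0,
      totalDegree_prod_X_sub_C] at hd
    obtain ⟨e, rfl⟩ := Nat.exists_eq_add_of_le' (le_of_add_le_left hd)
    have hpos := card_lastClass_pos n
    exact hg0 (ihd e (by lia) (hr.mono le_rfl (Nat.le_add_right _ _)) hg (by lia)
      (hv.of_prod_lastClass_mul hr))

end Uniqueness

section Exponents

theorem eqOn_of_antitoneOn_of_map_eq {ι β : Type*} [LinearOrder ι] [PartialOrder β]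
    {S : Finset ι} {f g : ι → β} (hf : AntitoneOn f S) (hg : AntitoneOn g S)
    (h : S.val.map f = S.val.map g) : Set.EqOn f g S := by
  have sorted {u : ι → β} (hu : AntitoneOn u S) : ((S.sort (· ≤ ·)).map u).Pairwise (· ≥ ·) :=
    List.pairwise_map.2 <| (S.pairwise_sort (· ≤ ·)).imp_of_mem fun hi hj hij =>
      hu (by simpa using hi) (by simpa using hj) hij
  have perm : ((S.sort (· ≤ ·)).map f).Perm ((S.sort (· ≤ ·)).map g) := by
    rw [← Multiset.coe_eq_coe, ← Multiset.map_coe, ← Multiset.map_coe, sort_eq, h]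
  intro i hi
  exact List.map_inj_left.1 (perm.eq_of_pairwise' (sorted hf) (sorted hg)) i (by simpa using hi)

variable {n : ℕ}

/-- An exponent vector that is weakly decreasing along each parity class of indices. These are the
dominant representatives of the `W`-orbits of exponent vectors. -/
def IsClasswiseAntitone (α : Fin n → ℕ) : Prop :=
  ∀ i j : Fin n, i ≤ j → (i : ℕ) % 2 = (j : ℕ) % 2 → α j ≤ α i

theorem eq_of_comp_parityPerm_eq {α β : Fin n → ℕ} (hα : IsClasswiseAntitone α)
    (hβ : IsClasswiseAntitone β) {π : Equiv.Perm (Fin n)} (hπ : ParityPerm π)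
    (h : β ∘ π = α) : α = β := by
  funext i
  let S : Finset (Fin n) := {j | (j : ℕ) % 2 = (i : ℕ) % 2}
  have hS {j : Fin n} : j ∈ S ↔ (j : ℕ) % 2 = (i : ℕ) % 2 := by simp [S]
  have antitoneOn {γ : Fin n → ℕ} (hγ : IsClasswiseAntitone γ) : AntitoneOn γ S :=
    fun j hj l hl hjl => hγ j l hjl ((hS.1 hj).trans (hS.1 hl).symm)
  have map_S : S.map π.toEmbedding = S :=
    eq_of_subset_of_card_le
      (fun j hj => by
        obtain ⟨l, hl, rfl⟩ := mem_map.1 hj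
        exact hS.2 ((hπ l).trans (hS.1 hl)))
      (card_map _).ge
  have multiset_eq : S.val.map α = S.val.map β := by
    rw [← h, ← Multiset.map_map]
    exact congr(Multiset.map β (Finset.val $map_S))
  exact eqOn_of_antitoneOn_of_map_eq (antitoneOn hα) (antitoneOn hβ) multiset_eq (hS.2 rfl)

theorem exists_add_succ_eq {L : ℕ → ℕ} (hL : Antitone L) (hL0 : ∀ i, n ≤ i → L i = 0) :
    ∃ A : ℕ → ℕ, ∀ i, A i + A (i + 1) = L i := by
  induction n generalizing L with
  | zero => exact ⟨0, fun i => (hL0 i i.zero_le).symm⟩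
  | succ n ih =>
    obtain ⟨A, hA⟩ := ih (L := fun i => L (i + 1)) (fun i j hij => hL (by lia))
      (fun i hi => hL0 (i + 1) (by lia))
    have A_zero_le : A 0 ≤ L 0 := calc
      A 0 ≤ L 1 := (Nat.le_add_right _ _).trans_eq (hA 0)
      _ ≤ L 0 := hL zero_le_one
    exact ⟨fun | 0 => L 0 - A 0 | i + 1 => A i,
      fun | 0 => Nat.sub_add_cancel A_zero_le | i + 1 => hA i⟩

theorem sum_range_even_add_succ (A : ℕ → ℕ) (n : ℕ) :
    ∑ i ∈ range n with Even i, (A i + A (i + 1)) =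
      ∑ i ∈ range n, A i + if Even n then 0 else A n := by
  induction n with
  | zero => simp
  | succ n ih =>
    rw [sum_filter] at ih ⊢
    rw [sum_range_succ, sum_range_succ, ih]
    by_cases hn : Even n
    · simp [hn, Nat.even_add_one, add_assoc]
    · simp [hn, Nat.even_add_one]

/-- The sums `α_i + α_{i+1}` of consecutive entries, with `α_{n+1} = 0`. This is the bijection from
dominant exponent vectors to partitions, with inverse
`α_i = λ_i - λ_{i+1} + λ_{i+2} - ⋯`. -/
noncomputable def consecutiveSum (α : Fin n → ℕ) : Fin n → ℕ :=
  fun i => α i + Function.extend Fin.val α 0 (i + 1)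

theorem extend_comp_val_of_eq_zero {A : ℕ → ℕ} (hA : ∀ i, n ≤ i → A i = 0) :
    Function.extend Fin.val (fun i : Fin n => A i) 0 = A := by
  funext i
  by_cases hi : i < n
  · exact Fin.val_injective.extend_apply (fun i : Fin n => A i) 0 ⟨i, hi⟩
  · rw [Function.extend_apply' _ _ _ (by rintro ⟨j, rfl⟩; exact hi j.2), hA i (not_lt.1 hi)]
    rfl

theorem antitone_extend_val {lam : Fin n → ℕ} (h : IsPartitionN lam) :
    Antitone (Function.extend Fin.val lam 0) := by
  intro i j hij
  by_cases hj : j < n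
  · lift j to Fin n using hj
    lift i to Fin n using hij.trans_lt j.2
    simpa [Fin.val_injective.extend_apply] using h i j hij
  · rw [Function.extend_apply' _ _ _ (by rintro ⟨l, rfl⟩; exact hj l.2)]
    exact Nat.zero_le _

theorem le_of_add_two_le {A : ℕ → ℕ} (h : ∀ i, A (i + 2) ≤ A i) {i j : ℕ} (hij : i ≤ j)
    (hmod : i % 2 = j % 2) : A j ≤ A i := by
  obtain ⟨t, rfl⟩ : ∃ t, j = i + 2 * t := ⟨(j - i) / 2, by lia⟩
  exact antitone_nat_of_succ_le (f := fun t => A (i + 2 * t)) (fun t => h _) t.zero_le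

theorem exists_consecutiveSum_eq {lam : Fin n → ℕ} (h : IsPartitionN lam) :
    ∃ α : Fin n → ℕ, IsClasswiseAntitone α ∧ ∑ i, α i = oddDeg lam ∧ consecutiveSum α = lam := by
  let L := Function.extend Fin.val lam 0
  have L_val (i : Fin n) : L i = lam i := Fin.val_injective.extend_apply lam 0 i
  have L_eq_zero (i : ℕ) (hi : n ≤ i) : L i = 0 :=
    Function.extend_apply' _ _ _ (by rintro ⟨j, rfl⟩; exact hi.not_gt j.2)
  have L_antitone : Antitone L := antitone_extend_val h
  obtain ⟨A, hA⟩ := exists_add_succ_eq L_antitone L_eq_zero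
  have A_eq_zero (i : ℕ) (hi : n ≤ i) : A i = 0 :=
    (Nat.add_eq_zero_iff.1 ((hA i).trans (L_eq_zero i hi))).1
  have A_add_two_le (i : ℕ) : A (i + 2) ≤ A i := by
    have : L (i + 1) ≤ L i := L_antitone i.le_succ
    rw [← hA, ← hA] at this
    lia
  refine ⟨fun i => A i, fun i j hij => le_of_add_two_le A_add_two_le hij, ?_, ?_⟩
  · calc ∑ i : Fin n, A i
        = ∑ i ∈ range n with Even i, (A i + A (i + 1)) := by
          rw [sum_range_even_add_succ, A_eq_zero n le_rfl, ite_self, add_zero,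
            Fin.sum_univ_eq_sum_range]
      _ = oddDeg lam := by
          simp only [oddDeg, sum_filter, hA, ← L_val]
          exact (Fin.sum_univ_eq_sum_range (fun i => if Even i then L i else 0) n).symm
  · funext i
    rw [consecutiveSum, extend_comp_val_of_eq_zero A_eq_zero, hA, L_val]

end Exponents

section OrbitSums

variable {n : ℕ}

open Classical in
/-- The orbit of an exponent vector under the group `W` of parity preserving permutations. -/
noncomputable def exponentOrbit (α : Fin n →₀ ℕ) : Finset (Fin n →₀ ℕ) :=
  (univ.filter ParityPerm).image fun π : Equiv.Perm (Fin n) => α.mapDomain π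

theorem mem_exponentOrbit {α β : Fin n →₀ ℕ} :
    β ∈ exponentOrbit α ↔ ∃ π : Equiv.Perm (Fin n), ParityPerm π ∧ α.mapDomain π = β := by
  simp [exponentOrbit]

theorem self_mem_exponentOrbit (α : Fin n →₀ ℕ) : α ∈ exponentOrbit α :=
  mem_exponentOrbit.2 ⟨1, fun _ => rfl, Finsupp.mapDomain_id⟩

theorem map_exponentOrbit (α : Fin n →₀ ℕ) {π : Equiv.Perm (Fin n)} (hπ : ParityPerm π) :
    (exponentOrbit α).map ⟨Finsupp.mapDomain π, Finsupp.mapDomain_injective π.injective⟩ =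
      exponentOrbit α := by
  refine eq_of_subset_of_card_le (fun γ hγ => ?_) (card_map _).ge
  obtain ⟨β, hβ, rfl⟩ := mem_map.1 hγ
  obtain ⟨τ, hτ, rfl⟩ := mem_exponentOrbit.1 hβ
  refine mem_exponentOrbit.2 ⟨π * τ, parityPerm_mul hπ hτ, ?_⟩
  rw [Equiv.Perm.coe_mul, Finsupp.mapDomain_comp]
  rfl

theorem eq_of_mem_exponentOrbit {α β : Fin n →₀ ℕ} (hα : IsClasswiseAntitone α)
    (hβ : IsClasswiseAntitone β) (h : β ∈ exponentOrbit α) : α = β := by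
  obtain ⟨π, hπ, rfl⟩ := mem_exponentOrbit.1 h
  refine DFunLike.coe_injective (eq_of_comp_parityPerm_eq hα hβ hπ ?_)
  funext i
  exact Finsupp.mapDomain_apply π.injective α i

/-- The sum of the monomials in the `W`-orbit of `z^α`. Each monomial is counted once, so that no
stabilizer order has to be inverted. -/
noncomputable def orbitSum (R : Type*) [CommRing R] (α : Fin n →₀ ℕ) : MvPolynomial (Fin n) R :=
  ∑ β ∈ exponentOrbit α, monomial β 1

variable {R : Type*} [CommRing R]

theorem coeff_orbitSum (α β : Fin n →₀ ℕ) :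
    coeff β (orbitSum R α) = if β ∈ exponentOrbit α then 1 else 0 := by
  simp [orbitSum, coeff_sum, coeff_monomial]

theorem orbitSum_mem_semisymmetric (α : Fin n →₀ ℕ) : orbitSum R α ∈ semisymmetric R n := by
  intro π hπ
  rw [orbitSum, map_sum]
  conv_rhs => rw [← map_exponentOrbit α hπ, sum_map]
  simp [rename_monomial]

theorem totalDegree_orbitSum_le (α : Fin n →₀ ℕ) : (orbitSum R α).totalDegree ≤ α.degree := by
  refine totalDegree_finsetSum_le fun β hβ => ?_
  obtain ⟨π, -, rfl⟩ := mem_exponentOrbit.1 hβ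
  exact (isHomogeneous_monomial 1 (Finsupp.degree_mapDomain π α)).totalDegree_le

theorem linearIndependent_orbitSum {ι : Type*} {α : ι → Fin n →₀ ℕ} (hinj : Function.Injective α)
    (hα : ∀ i, IsClasswiseAntitone (α i)) : LinearIndependent R fun i => orbitSum R (α i) := by
  refine .of_pairwise_dual_eq_zero_one _ (fun i => lcoeff R (α i)) (fun i j hij => ?_) fun i => ?_
  · have notMem : α i ∉ exponentOrbit (α j) :=
      fun h => hij (hinj (eq_of_mem_exponentOrbit (hα j) (hα i) h).symm)
    simp [coeff_orbitSum, notMem]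
  · simp [coeff_orbitSum, self_mem_exponentOrbit]

theorem exists_linearIndependent_semisymmetricOfDegreeLE (R : Type*) [CommRing R] (n d : ℕ) :
    ∃ b : boundedPartitions n d → semisymmetricOfDegreeLE R n d, LinearIndependent R b := by
  choose α hα hdeg hsum using fun lam : boundedPartitions n d => exists_consecutiveSum_eq lam.2.1
  let exponent (lam : boundedPartitions n d) := Finsupp.equivFunOnFinite.symm (α lam)
  have exponent_injective : Function.Injective exponent := fun lam mu h => by
    rw [Subtype.ext_iff, ← hsum, ← hsum, Finsupp.equivFunOnFinite.symm.injective h]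
  have degree_le (lam : boundedPartitions n d) : (exponent lam).degree ≤ d := by
    rw [Finsupp.degree_eq_sum]
    exact (hdeg lam).trans_le lam.2.2
  refine ⟨fun lam => ⟨orbitSum R (exponent lam), mem_semisymmetricOfDegreeLE.2
    ⟨orbitSum_mem_semisymmetric _, (totalDegree_orbitSum_le _).trans (degree_le lam)⟩⟩, ?_⟩
  exact .of_comp (Submodule.subtype _) (linearIndependent_orbitSum exponent_injective hα)

end OrbitSums

section Interpolation

theorem bijective_of_injective_of_linearIndependent {K V ι : Type*} [DivisionRing K]
    [AddCommGroup V] [Module K V] [Finite ι] {E : V →ₗ[K] (ι → K)} (hE : Function.Injective E)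
    {b : ι → V} (hb : LinearIndependent K b) : Function.Bijective E := by
  have := Fintype.ofFinite ι
  have span_eq_top : Submodule.span K (Set.range (E ∘ b)) = ⊤ :=
    (hb.map_injOn E hE.injOn).span_eq_top_of_card_eq_finrank' (by simp)
  refine ⟨hE, LinearMap.range_eq_top.1 (top_le_iff.1 ?_)⟩
  rw [← span_eq_top, Submodule.span_le]
  rintro _ ⟨i, rfl⟩
  exact LinearMap.mem_range_self E (b i)

theorem finite_boundedPartitions (n d : ℕ) : (boundedPartitions n d).Finite :=
  (Set.finite_Iic fun _ => d).subset fun _ h i => (le_oddDeg h.1 i).trans h.2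

variable {k : Type*} [Field k] {n : ℕ}

/-- Evaluation of invariant polynomials of degree at most `d` at the nodes `ρ + λ`, `λ ∈ Λ(d)`. -/
noncomputable def evalNodes (n d : ℕ) (r : k) :
    semisymmetricOfDegreeLE k n d →ₗ[k] (boundedPartitions n d → k) :=
  LinearMap.pi fun lam =>
    (aeval (R := k) (node r 0 lam.1)).toLinearMap ∘ₗ (semisymmetricOfDegreeLE k n d).subtype

theorem evalNodes_apply {d : ℕ} (r : k) (f : semisymmetricOfDegreeLE k n d)
    (lam : boundedPartitions n d) : evalNodes n d r f lam = eval (node r 0 lam.1) f.1 := by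
  simp [evalNodes, aeval_eq_eval]

theorem bijective_evalNodes {d : ℕ} {r : k} (hr : IsNonexceptional n d r) :
    Function.Bijective (evalNodes n d r) := by
  have := (finite_boundedPartitions n d).to_subtype
  obtain ⟨b, hb⟩ := exists_linearIndependent_semisymmetricOfDegreeLE k n d
  refine bijective_of_injective_of_linearIndependent ?_ hb
  refine (injective_iff_map_eq_zero _).2 fun f hf => Subtype.ext ?_
  obtain ⟨hinv, hdeg⟩ := mem_semisymmetricOfDegreeLE.1 f.2
  refine eq_zero_of_vanishesAtNodes hr hinv hdeg (s := 0) fun lam hlam => ?_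
  rw [← evalNodes_apply r f ⟨lam, hlam⟩, hf, Pi.zero_apply]

theorem isNonexceptional_of_not_negative_rational [CharZero k] {r : k}
    (hr : ¬ ∃ q : ℚ, q < 0 ∧ (q : k) = r) (n d : ℕ) : IsNonexceptional n d r := by
  intro i _ _ b hb h
  have hb0 : 0 < b := (mem_Icc.1 hb).1
  rcases i.eq_zero_or_pos with rfl | hi
  · simp [hb0.ne'] at h
  · refine hr ⟨-(b / i), by simpa using by positivity, ?_⟩
    have : (i : k) ≠ 0 := Nat.cast_ne_zero.2 hi.ne'
    push_cast
    field_simp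
    linear_combination -h

end Interpolation

end SemisymmetricInterpolation

open SemisymmetricInterpolation in
theorem semisymmetric_interpolation_existence_uniqueness_general {k : Type*} [Field k] {n : ℕ}
    {r : k} {d : ℕ} (hr : IsNonexceptional n d r)
    (rho : Fin n → k) (hrho : ∀ i : Fin n, rho i = ((n - 1 - (i : ℕ) : ℕ) : k) * r)
    (a : (Fin n → ℕ) → k) :
    ∃! f : MvPolynomial (Fin n) k,
      (∀ π : Equiv.Perm (Fin n), ParityPerm π → rename π f = f) ∧
      f.totalDegree ≤ d ∧
      ∀ lam : Fin n → ℕ, IsPartitionN lam → oddDeg lam ≤ d →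
        eval (fun i => rho i + (lam i : k)) f = a lam := by
  have node_eq (lam : Fin n → ℕ) : (fun i => rho i + (lam i : k)) = node r 0 lam := by
    funext i
    rw [node, hrho, add_zero]
  simp only [node_eq]
  obtain ⟨f, hf, funique⟩ := (bijective_evalNodes hr).existsUnique fun lam => a lam
  obtain ⟨hinv, hdeg⟩ := mem_semisymmetricOfDegreeLE.1 f.2
  refine ⟨f, ⟨hinv, hdeg, fun lam hlam hodd => ?_⟩, ?_⟩
  · rw [← evalNodes_apply r f ⟨lam, hlam, hodd⟩, hf]
  · rintro g ⟨ginv, gdeg, hg⟩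
    have gmem : g ∈ semisymmetricOfDegreeLE k n d := mem_semisymmetricOfDegreeLE.2 ⟨ginv, gdeg⟩
    refine congr_arg Subtype.val (funique ⟨g, gmem⟩ (funext fun lam => ?_))
    rw [evalNodes_apply]
    exact hg lam lam.2.1 lam.2.2

/-- Existence and uniqueness of the semisymmetric interpolation polynomial:
for every `d` and prescribed values `a` on `Λ(d)`, there is a unique `W`-invariant
polynomial `f` of degree `≤ d` with `f(ρ + λ) = a λ` for all partitions `λ` with
`|λ|_odd ≤ d`. Here `ρ = ((n−1)r, …, r, 0)` and `r` is not a negative rational. -/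
theorem semisymmetric_interpolation_existence_uniqueness
    (k : Type*) [Field k] [CharZero k] (n : ℕ) (hn : 1 ≤ n) (r : k)
    (hr : ¬ ∃ q : ℚ, q < 0 ∧ (q : k) = r)
    (rho : Fin n → k) (hrho : ∀ i : Fin n, rho i = ((n - 1 - (i : ℕ) : ℕ) : k) * r)
    (d : ℕ) (a : (Fin n → ℕ) → k) :
    ∃! f : MvPolynomial (Fin n) k,
      (∀ π : Equiv.Perm (Fin n), ParityPerm π → rename π f = f) ∧
      f.totalDegree ≤ d ∧
      ∀ lam : Fin n → ℕ, IsPartitionN lam → oddDeg lam ≤ d →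
        eval (fun i => rho i + (lam i : k)) f = a lam :=
  semisymmetric_interpolation_existence_uniqueness_general
    (SemisymmetricInterpolation.isNonexceptional_of_not_negative_rational hr n d) rho hrho a
end
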